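/- There exists a constant c such that every finite simple outerplanar graph G with n ≥ 2 vertices has a planar straight-line drawing of height at most c · log n. -/

import Mathlib

open Set

/-- A point in the plane. -/
abbrev Pt : Type := ℝ × ℝ

/-- A point has integer coordinates. -/
def IsIntPt (p : Pt) : Prop := (∃ a : ℤ, p.1 = (a : ℝ)) ∧ (∃ b : ℤ, p.2 = (b : ℝ))

/-- The (closed) segments of a polygonal chain, as pairs of consecutive corners. -/
def chainSegs (l : List Pt) : List (Pt × Pt) := l.zip l.tail

/-- The set of points covered by a polygonal chain. -/
def chainSet (l : List Pt) : Set Pt := ⋃ s ∈ chainSegs l, segment ℝ s.1 s.2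

/-- A polygonal chain is simple (non-self-intersecting): it has at least two
corners, all corners are distinct, and two of its segments meet only if they are
consecutive, and then only in their shared corner. -/
def IsSimpleChain (l : List Pt) : Prop :=
  2 ≤ l.length ∧ l.Nodup ∧
    ∀ i j : ℕ, i < j → ∀ (hi : i < (chainSegs l).length) (hj : j < (chainSegs l).length),
      segment ℝ ((chainSegs l).get ⟨i, hi⟩).1 ((chainSegs l).get ⟨i, hi⟩).2 ∩
        segment ℝ ((chainSegs l).get ⟨j, hj⟩).1 ((chainSegs l).get ⟨j, hj⟩).2 ⊆
        if j = i + 1 then {((chainSegs l).get ⟨j, hj⟩).1} else (∅ : Set Pt)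

/-- Every interior corner of the chain is a genuine bend (a direction change). -/
def GenuineBends (l : List Pt) : Prop :=
  ∀ i : ℕ, ∀ h : i + 2 < l.length,
    ¬ Collinear ℝ ({l.get ⟨i, by omega⟩, l.get ⟨i + 1, by omega⟩, l.get ⟨i + 2, h⟩} : Set Pt)

/-- The chain is a y-monotone path (horizontal segments allowed). -/
def IsMonoChain (l : List Pt) : Prop :=
  (l.map Prod.snd).Chain' (· ≤ ·) ∨ (l.map Prod.snd).Chain' (fun a b => b ≤ a)

/-- All segments of the chain are horizontal or vertical. -/
def IsOrthoChain (l : List Pt) : Prop :=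
  ∀ s ∈ chainSegs l, s.1.1 = s.2.1 ∨ s.1.2 = s.2.2

/-- A poly-line drawing of a graph `G`: every vertex is a point, and every edge
`uv` is the polygonal chain through the list `bends u v` of bend points
(listed in order from `u` to `v`). -/
structure PolylineDrawing {V : Type*} (G : SimpleGraph V) where
  pos : V → Pt
  bends : V → V → List Pt
  bends_symm : ∀ u v, bends v u = (bends u v).reverse

namespace PolylineDrawing

variable {V : Type*} {G : SimpleGraph V}

/-- The corner list of the curve of edge `uv`. -/
def chain (D : PolylineDrawing G) (u v : V) : List Pt :=
  D.pos u :: (D.bends u v ++ [D.pos v])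

/-- The set of points of the curve of edge `uv`. -/
def curve (D : PolylineDrawing G) (u v : V) : Set Pt := chainSet (D.chain u v)

/-- The defining elements of the drawing: vertex points and bends. -/
def points (D : PolylineDrawing G) : Set Pt :=
  Set.range D.pos ∪ ⋃ (u) (v) (_ : G.Adj u v), {p | p ∈ D.bends u v}

/-- The drawing is planar: vertex points are pairwise distinct, every edge curve
is a simple chain whose interior corners are genuine bends, an edge curve contains
no vertex point other than its endpoints, and two distinct edge curves intersect
only in points of common endpoints. -/
def IsPlanar (D : PolylineDrawing G) : Prop :=
  Function.Injective D.pos ∧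
  (∀ u v, G.Adj u v → IsSimpleChain (D.chain u v) ∧ GenuineBends (D.chain u v)) ∧
  (∀ u v w, G.Adj u v → w ≠ u → w ≠ v → D.pos w ∉ D.curve u v) ∧
  (∀ u v x y, G.Adj u v → G.Adj x y → s(u, v) ≠ s(x, y) →
    D.curve u v ∩ D.curve x y ⊆ D.pos '' (({u, v} : Set V) ∩ ({x, y} : Set V)))

/-- All defining elements have integer coordinates. -/
def IntCoords (D : PolylineDrawing G) : Prop := ∀ p ∈ D.points, IsIntPt p

/-- A straight-line drawing: no edge has bends. -/
def IsStraightLine (D : PolylineDrawing G) : Prop := ∀ u v : V, D.bends u v = []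

/-- Every edge curve is a y-monotone path. -/
def IsYMonotone (D : PolylineDrawing G) : Prop :=
  ∀ u v, G.Adj u v → IsMonoChain (D.chain u v)

/-- The drawing fits (after translation) in the rows `1, …, h`. -/
def InHeight (D : PolylineDrawing G) (h : ℕ) : Prop :=
  ∃ y0 : ℤ, ∀ p ∈ D.points, (y0 : ℝ) ≤ p.2 ∧ p.2 ≤ (y0 : ℝ) + (h : ℝ) - 1

/-- The drawing fits (after translation) in the columns `1, …, w`. -/
def InWidth (D : PolylineDrawing G) (w : ℕ) : Prop :=
  ∃ x0 : ℤ, ∀ p ∈ D.points, (x0 : ℝ) ≤ p.1 ∧ p.1 ≤ (x0 : ℝ) + (w : ℝ) - 1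

end PolylineDrawing

/-- An axis-parallel box (possibly degenerated to a segment or a point). -/
structure Box where
  x1 : ℝ
  x2 : ℝ
  y1 : ℝ
  y2 : ℝ
  hx : x1 ≤ x2
  hy : y1 ≤ y2

/-- The set of points of a box. -/
def Box.pts (b : Box) : Set Pt := Set.Icc b.x1 b.x2 ×ˢ Set.Icc b.y1 b.y2

/-- An orthogonal drawing of a graph `G`: every vertex is an axis-aligned box, and
every edge `uv` is an axis-parallel polygonal chain `chain u v` (its first corner is
the attachment point on the box of `u`, its last corner the attachment point on the
box of `v`). -/
structure OrthDrawing {V : Type*} (G : SimpleGraph V) where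
  box : V → Box
  chain : V → V → List Pt
  chain_symm : ∀ u v, chain v u = (chain u v).reverse

namespace OrthDrawing

variable {V : Type*} {G : SimpleGraph V}

/-- The set of points of the curve of edge `uv`. -/
def curve (D : OrthDrawing G) (u v : V) : Set Pt := chainSet (D.chain u v)

/-- The defining elements of the drawing: corners of vertex boxes, and corners
(attachment points and bends) of edge chains. -/
def points (D : OrthDrawing G) : Set Pt :=
  (⋃ v, ({((D.box v).x1, (D.box v).y1), ((D.box v).x1, (D.box v).y2),
          ((D.box v).x2, (D.box v).y1), ((D.box v).x2, (D.box v).y2)} : Set Pt)) ∪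
    ⋃ (u) (v) (_ : G.Adj u v), {p | p ∈ D.chain u v}

/-- All points covered by the drawing (boxes and edge curves). -/
def region (D : OrthDrawing G) : Set Pt :=
  (⋃ v, (D.box v).pts) ∪ ⋃ (u) (v) (_ : G.Adj u v), D.curve u v

/-- The drawing is planar: vertex boxes are pairwise disjoint; every edge curve is a
simple axis-parallel chain, with genuine bends, joining the boxes of its endpoints;
an edge curve meets a vertex box only in its attachment points; and two distinct
edge curves intersect only in common endpoints. -/
def IsPlanar (D : OrthDrawing G) : Prop :=
  (∀ u v : V, u ≠ v → Disjoint (D.box u).pts (D.box v).pts) ∧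
  (∀ u v, G.Adj u v → IsSimpleChain (D.chain u v) ∧ IsOrthoChain (D.chain u v) ∧
      GenuineBends (D.chain u v)) ∧
  (∀ u v, G.Adj u v → ∃ p q l, D.chain u v = p :: (l ++ [q]) ∧
      p ∈ (D.box u).pts ∧ q ∈ (D.box v).pts) ∧
  (∀ u v w, G.Adj u v → D.curve u v ∩ (D.box w).pts ⊆
      {p | (w = u ∧ (D.chain u v).head? = some p) ∨
           (w = v ∧ (D.chain u v).getLast? = some p)}) ∧
  (∀ u v x y, G.Adj u v → G.Adj x y → s(u, v) ≠ s(x, y) →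
      D.curve u v ∩ D.curve x y ⊆
        {p | ((D.chain u v).head? = some p ∨ (D.chain u v).getLast? = some p) ∧
             ((D.chain x y).head? = some p ∨ (D.chain x y).getLast? = some p)})

/-- A flat drawing: every vertex box is degenerated to a horizontal segment. -/
def IsFlat (D : OrthDrawing G) : Prop := ∀ v, (D.box v).y1 = (D.box v).y2

/-- A visibility representation: an orthogonal drawing without bends, i.e. every
edge is a single horizontal or vertical segment. -/
def IsVR (D : OrthDrawing G) : Prop := ∀ u v, G.Adj u v → (D.chain u v).length = 2

/-- Every edge curve is a y-monotone path. -/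
def IsYMonotone (D : OrthDrawing G) : Prop := ∀ u v, G.Adj u v → IsMonoChain (D.chain u v)

/-- All defining elements have integer coordinates. -/
def IntCoords (D : OrthDrawing G) : Prop := ∀ p ∈ D.points, IsIntPt p

/-- The drawing fits (after translation) in the rows `1, …, h`. -/
def InHeight (D : OrthDrawing G) (h : ℕ) : Prop :=
  ∃ y0 : ℤ, ∀ p ∈ D.points, (y0 : ℝ) ≤ p.2 ∧ p.2 ≤ (y0 : ℝ) + (h : ℝ) - 1

/-- The drawing fits (after translation) in the columns `1, …, w`. -/
def InWidth (D : OrthDrawing G) (w : ℕ) : Prop :=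
  ∃ x0 : ℤ, ∀ p ∈ D.points, (x0 : ℝ) ≤ p.1 ∧ p.1 ≤ (x0 : ℝ) + (w : ℝ) - 1

end OrthDrawing

/-- A graph is outerplanar iff its vertices can be placed (injectively) on the unit
circle so that edges, drawn as straight chords, intersect only in common endpoints
(a one-page book embedding). -/
def IsOuterplanar {V : Type*} (G : SimpleGraph V) : Prop :=
  ∃ pos : V → Pt, Function.Injective pos ∧
    (∀ v, (pos v).1 ^ 2 + (pos v).2 ^ 2 = 1) ∧
    ∀ u v x y, G.Adj u v → G.Adj x y → s(u, v) ≠ s(x, y) →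
      segment ℝ (pos u) (pos v) ∩ segment ℝ (pos x) (pos y) ⊆
        pos '' (({u, v} : Set V) ∩ ({x, y} : Set V))

/-- `G` has a planar straight-line drawing (with integer coordinates) of height at
most `h`. -/
def HasSLDrawingOfHeight {V : Type*} (G : SimpleGraph V) (h : ℕ) : Prop :=
  ∃ D : PolylineDrawing G, D.IsStraightLine ∧ D.IsPlanar ∧ D.IntCoords ∧ D.InHeight h

/-!
If consecutive vertices are placed far enough apart horizontally, a straight edge stays within
distance one of the row of its left endpoint until just before its right endpoint, so planarity
becomes a combinatorial condition on the left-to-right order and the rows of the vertices.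

Reading the vertices along the circle turns an outerplanar graph into a graph without crossing edges
on a linear order. The interval between two vertices then splits at the apex of the inner face at
its root edge into two intervals, recursively. One of the two has at most half the total size. If
the first one is light, it is drawn in one row less and the second one is drawn to its right. If the
first one is heavy, follow the heavy halves inside it down to a single edge: all pieces that branch
off are light, so they fit in slightly fewer rows, and the endpoints of the root edges along the way
stay in the bottom and in the top row. Hence doubling the size costs three rows, and a graph with
`n` vertices gets height `3 ⌊log₂ n⌋ + 4`.
-/

section Order

variable {V α β : Type*} [Preorder α] [Preorder β] {S : Set V} {a s t : V}

/-- `a` is the strict minimizer of `f` on `S`; the condition `a ∈ S` is not part of it. -/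
def IsStrictMinOn (f : V → α) (S : Set V) (a : V) : Prop := ∀ ⦃v⦄, v ∈ S → v ≠ a → f a < f v

/-- `a` is the strict maximizer of `f` on `S`; the condition `a ∈ S` is not part of it. -/
def IsStrictMaxOn (f : V → α) (S : Set V) (a : V) : Prop := ∀ ⦃v⦄, v ∈ S → v ≠ a → f v < f a

/-- `s` and `t`, in either order, come before all other elements of `S` in the order `τ`. -/
def IsLeadingPair (τ : V → α) (S : Set V) (s t : V) : Prop :=
  ∀ ⦃v⦄, v ∈ S → v ≠ s → v ≠ t → τ s < τ v ∧ τ t < τ v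

/-- `g` orders the elements of `S` as `f` does. -/
def SameOrderOn (f : V → α) (g : V → β) (S : Set V) : Prop :=
  ∀ ⦃u⦄, u ∈ S → ∀ ⦃v⦄, v ∈ S → (g u < g v ↔ f u < f v)

variable {f τ : V → α} {g τ' : V → β}

lemma SameOrderOn.of_eqOn {f g : V → α} (h : EqOn f g S) : SameOrderOn f g S := fun u hu v hv => by
  rw [h hu, h hv]

lemma IsStrictMinOn.congr (h : IsStrictMinOn f S a) (hfg : SameOrderOn f g S) (ha : a ∈ S) :
    IsStrictMinOn g S a := fun _ hv hne => (hfg ha hv).2 (h hv hne)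

lemma IsStrictMaxOn.congr (h : IsStrictMaxOn f S a) (hfg : SameOrderOn f g S) (ha : a ∈ S) :
    IsStrictMaxOn g S a := fun _ hv hne => (hfg hv ha).2 (h hv hne)

lemma IsStrictMinOn.ne_of_lt {u v : V} (h : IsStrictMinOn f S a) (hu : u ∈ S) (huv : f u < f v) :
    v ≠ a := by
  rintro rfl
  exact huv.asymm (h hu fun e => (e ▸ huv).false)

lemma IsStrictMaxOn.ne_of_lt {u v : V} (h : IsStrictMaxOn f S a) (hv : v ∈ S) (huv : f u < f v) :
    u ≠ a := by
  rintro rfl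
  exact huv.asymm (h hv fun e => (e ▸ huv).false)

lemma IsStrictMinOn.isLeadingPair (h : IsStrictMinOn τ S s) : IsLeadingPair τ S s s :=
  fun _ hv hne _ => ⟨h hv hne, h hv hne⟩

namespace IsLeadingPair

lemma congr (h : IsLeadingPair τ S s t) (hτ : SameOrderOn τ τ' S) (hs : s ∈ S) (ht : t ∈ S) :
    IsLeadingPair τ' S s t := fun _ hv hvs hvt =>
  ⟨(hτ hs hv).2 (h hv hvs hvt).1, (hτ ht hv).2 (h hv hvs hvt).2⟩

lemma symm (h : IsLeadingPair τ S s t) : IsLeadingPair τ S t s :=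
  fun _ hv ht hs => (h hv hs ht).symm

lemma eq_of_lt {v : V} (h : IsLeadingPair τ S s t) (hv : v ∈ S) (hlt : τ v < τ s) : v = t := by
  by_contra hne
  have hvs : v ≠ s := by rintro rfl; exact hlt.false
  exact hlt.asymm (h hv hvs hne).1

lemma ne_of_lt_of_lt {u v w : V} (h : IsLeadingPair τ S s t) (hu : u ∈ S) (hv : v ∈ S)
    (huv : u ≠ v) (huw : τ u < τ w) (hvw : τ v < τ w) : w ≠ s ∧ w ≠ t := by
  refine ⟨?_, ?_⟩ <;> rintro rfl
  · exact huv ((h.eq_of_lt hu huw).trans (h.eq_of_lt hv hvw).symm)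
  · exact huv ((h.symm.eq_of_lt hu huw).trans (h.symm.eq_of_lt hv hvw).symm)

end IsLeadingPair

end Order

section RowLayout

/-- A ray that leaves row `p` almost horizontally, turning towards row `q`, cannot pass an edge
between the rows `a` and `b`. -/
def Blocks (p q a b : ℤ) : Prop :=
  (p ≤ q ∧ min a b ≤ p ∧ p < max a b) ∨ (q ≤ p ∧ min a b < p ∧ p ≤ max a b)

variable {V α β : Type*} [LinearOrder α] [LinearOrder β] {G : SimpleGraph V} {S : Set V}
  {τ : V → α} {y : V → ℤ} {s t : V}

/-- The vertices of `S` can be placed in the left-to-right order `τ`, with vertex `v` in row `y v`,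
so that straight edges do not cross once consecutive vertices are far enough apart. Then the edge
from `i` to a later vertex `j` stays within distance one of the row of `i` until just before `j`,
and planarity becomes this combinatorial condition. -/
structure IsRowLayout (G : SimpleGraph V) (S : Set V) (τ : V → α) (y : V → ℤ) : Prop where
  injOn : InjOn τ S
  row_ne : ∀ ⦃i⦄, i ∈ S → ∀ ⦃j⦄, j ∈ S → ∀ ⦃k⦄, k ∈ S → G.Adj i j → τ i < τ k → τ k < τ j →
    y k = y i → y k ≠ y j
  not_blocks : ∀ ⦃i⦄, i ∈ S → ∀ ⦃j⦄, j ∈ S → ∀ ⦃a⦄, a ∈ S → ∀ ⦃b⦄, b ∈ S → G.Adj i j →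
    G.Adj a b → τ i < τ b → τ b < τ j → τ a < τ b → a ≠ i → ¬ Blocks (y i) (y j) (y a) (y b)

lemma eq_iff_of_lt_iff {a b : α} {c d : β} (h₁ : c < d ↔ a < b) (h₂ : d < c ↔ b < a) :
    c = d ↔ a = b := by
  simp only [eq_iff_le_not_lt, ← not_lt, h₁, h₂]

lemma isRowLayout_pair (τ : V → α) (y : V → ℤ) (h : τ s < τ t) : IsRowLayout G {s, t} τ y where
  injOn := by
    rintro u (rfl | rfl) v (rfl | rfl) e <;>
      first | rfl | exact absurd e h.ne | exact absurd e h.ne'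
  row_ne := by
    rintro i (rfl | rfl) j (rfl | rfl) k (rfl | rfl) - h₁ h₂ <;> order
  not_blocks := by
    rintro i (rfl | rfl) j (rfl | rfl) a (rfl | rfl) b (rfl | rfl) - - h₁ h₂ h₃ - <;> order

namespace IsRowLayout

lemma congr {τ' : V → β} {y' : V → ℤ} (h : IsRowLayout G S τ y) (hτ : SameOrderOn τ τ' S)
    (hy : SameOrderOn y y' S) : IsRowLayout G S τ' y' where
  injOn u hu v hv e := h.injOn hu hv ((eq_iff_of_lt_iff (hτ hu hv) (hτ hv hu)).1 e)
  row_ne i hi j hj k hk e h₁ h₂ := by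
    have := h.row_ne hi hj hk e ((hτ hi hk).1 h₁) ((hτ hk hj).1 h₂)
    have hki := eq_iff_of_lt_iff (hy hk hi) (hy hi hk)
    have hkj := eq_iff_of_lt_iff (hy hk hj) (hy hj hk)
    tauto
  not_blocks i hi j hj a ha b hb e f h₁ h₂ h₃ hne := by
    have := h.not_blocks hi hj ha hb e f ((hτ hi hb).1 h₁) ((hτ hb hj).1 h₂) ((hτ ha hb).1 h₃) hne
    have := hy hi hj; have := hy hj hi; have := hy hi ha; have := hy ha hi
    have := hy hi hb; have := hy hb hi
    unfold Blocks at *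
    omega

lemma neg (h : IsRowLayout G S τ y) : IsRowLayout G S τ (-y) where
  injOn := h.injOn
  row_ne i hi j hj k hk e h₁ h₂ := by
    simpa only [Pi.neg_apply, neg_inj, ne_eq] using h.row_ne hi hj hk e h₁ h₂
  not_blocks i hi j hj a ha b hb e f h₁ h₂ h₃ hne := by
    have := h.not_blocks hi hj ha hb e f h₁ h₂ h₃ hne
    simp only [Blocks, Pi.neg_apply] at *
    omega

lemma const_sub (h : IsRowLayout G S τ y) (c : ℤ) : IsRowLayout G S τ (fun v => c - y v) :=
  h.neg.congr (fun _ _ _ _ => Iff.rfl) fun u _ v _ => by simp only [Pi.neg_apply]; omega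

lemma update_of_lt [DecidableEq V] {r : ℤ} (h : IsRowLayout G S τ y)
    (hst : IsLeadingPair τ S s t) (hmin : ∀ v ∈ S, y s ≤ y v) (hr : r < y s) :
    IsRowLayout G S τ (Function.update y s r) where
  injOn := h.injOn
  row_ne i hi j hj k hk e h₁ h₂ hki hkj := by
    have hik : i ≠ k := by rintro rfl; exact h₁.false
    have := hmin i hi
    have := hmin k hk
    have := h.row_ne hi hj hk e h₁ h₂
    grind
  not_blocks i hi j hj a ha b hb e f h₁ h₂ h₃ hne := by
    have hbs : b ≠ s := (hst.ne_of_lt_of_lt hi ha hne.symm h₁ h₃).1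
    have hjs : j ≠ s := (hst.ne_of_lt_of_lt hi ha hne.symm (h₁.trans h₂) (h₃.trans h₂)).1
    have hrow := h.row_ne hi hj hb e h₁ h₂
    have hblocks := h.not_blocks hi hj ha hb e f h₁ h₂ h₃ hne
    have := hmin i hi; have := hmin j hj; have := hmin a ha; have := hmin b hb
    rw [Function.update_of_ne hbs, Function.update_of_ne hjs]
    unfold Blocks at *
    rcases eq_or_ne i s with rfl | his
    · rw [Function.update_self, Function.update_of_ne hne]
      omega
    rw [Function.update_of_ne his]
    rcases eq_or_ne a s with rfl | has
    · rw [Function.update_self]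
      omega
    · rwa [Function.update_of_ne has]

lemma update_of_gt [DecidableEq V] {r : ℤ} (h : IsRowLayout G S τ y)
    (hst : IsLeadingPair τ S s t) (hmax : ∀ v ∈ S, y v ≤ y s) (hr : y s < r) :
    IsRowLayout G S τ (Function.update y s r) := by
  have hneg := (h.neg.update_of_lt hst (fun v hv => neg_le_neg (hmax v hv)) (neg_lt_neg hr)).neg
  rwa [Function.update_neg, neg_neg] at hneg

end IsRowLayout

/-- The order obtained from `τ` by moving `s` to the front. -/
def moveFront [DecidableEq V] (τ : V → ℕ) (s : V) : V → ℕ := Function.update (fun v => τ v + 1) s 0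

section MoveFront

variable [DecidableEq V] {τ : V → ℕ} {u v : V}

lemma moveFront_lt_iff (hu : u ≠ s) (hv : v ≠ s) :
    moveFront τ s u < moveFront τ s v ↔ τ u < τ v := by
  simp only [moveFront, Function.update_of_ne hu, Function.update_of_ne hv,
    Nat.add_lt_add_iff_right]

lemma moveFront_self_lt (hv : v ≠ s) : moveFront τ s s < moveFront τ s v := by
  simp only [moveFront, Function.update_self, Function.update_of_ne hv, Nat.zero_lt_succ]

lemma isStrictMinOn_moveFront : IsStrictMinOn (moveFront τ s) S s := fun _ _ => moveFront_self_lt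

lemma sameOrderOn_moveFront (hs : s ∉ S) : SameOrderOn τ (moveFront τ s) S := fun _ hu _ hv =>
  moveFront_lt_iff (ne_of_mem_of_not_mem hu hs) (ne_of_mem_of_not_mem hv hs)

lemma isLeadingPair_moveFront (h : IsLeadingPair τ S s t) :
    IsLeadingPair (moveFront τ s) S s t := by
  intro v hv hvs hvt
  refine ⟨moveFront_self_lt hvs, ?_⟩
  rcases eq_or_ne t s with rfl | hts
  · exact moveFront_self_lt hvs
  · exact (moveFront_lt_iff hts hvs).2 (h hv hvs hvt).2

lemma isRowLayout_moveFront (h : IsRowLayout G S τ y) (hst : IsLeadingPair τ S s t)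
    (hy : y s ≠ y t) : IsRowLayout G S (moveFront τ s) y := by
  have hlead := isLeadingPair_moveFront hst
  have hlt : ∀ {u v}, v ∈ S → v ≠ s → v ≠ t →
      moveFront τ s u < moveFront τ s v → τ u < τ v := by
    intro u v hv hvs hvt huv
    rcases eq_or_ne u s with rfl | hus
    · exact (hst hv hvs hvt).1
    · exact (moveFront_lt_iff hus hvs).1 huv
  refine ⟨fun u hu v hv e => ?_, fun i hi j hj k hk e h₁ h₂ hki => ?_,
    fun i hi j hj a ha b hb e f h₁ h₂ h₃ hne => ?_⟩
  · by_contra huv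
    rcases eq_or_ne u s with rfl | hus
    · exact (moveFront_self_lt (Ne.symm huv)).ne e
    rcases eq_or_ne v s with rfl | hvs
    · exact (moveFront_self_lt huv).ne' e
    exact huv (h.injOn hu hv ((eq_iff_of_lt_iff (moveFront_lt_iff hus hvs)
      (moveFront_lt_iff hvs hus)).1 e))
  · have hik : i ≠ k := by rintro rfl; exact h₁.false
    obtain ⟨hjs, hjt⟩ := hlead.ne_of_lt_of_lt hi hk hik (h₁.trans h₂) h₂
    have hks : k ≠ s := by rintro rfl; exact (h₁.trans (moveFront_self_lt hik)).false
    rcases eq_or_ne k t with rfl | hkt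
    · exact absurd ((hlead.symm.eq_of_lt hi h₁) ▸ hki.symm) hy
    · exact h.row_ne hi hj hk e (hlt hk hks hkt h₁) (hlt hj hjs hjt h₂) hki
  · obtain ⟨hbs, hbt⟩ := hlead.ne_of_lt_of_lt hi ha hne.symm h₁ h₃
    obtain ⟨hjs, hjt⟩ := hlead.ne_of_lt_of_lt hi ha hne.symm (h₁.trans h₂) (h₃.trans h₂)
    exact h.not_blocks hi hj ha hb e f (hlt hb hbs hbt h₁) (hlt hj hjs hjt h₂)
      (hlt hb hbs hbt h₃) hne

end MoveFront

end RowLayout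

section Union

variable {V : Type*} {A B : Set V} {x : V}

lemma exists_eqOn_union {α : Type*} (hAB : A ∩ B = {x}) {y₁ y₂ : V → α} (h : y₁ x = y₂ x) :
    ∃ y : V → α, EqOn y y₁ A ∧ EqOn y y₂ B := by
  classical
  refine ⟨A.piecewise y₁ y₂, A.piecewise_eqOn y₁ y₂, fun v hv => ?_⟩
  by_cases hA : v ∈ A
  · obtain rfl : v = x := hAB.subset ⟨hA, hv⟩
    rw [piecewise_eq_of_mem _ _ _ hA, h]
  · exact piecewise_eq_of_notMem _ _ _ hA

lemma exists_order_union [Finite V] (hAB : A ∩ B = {x}) (τ₁ : V → ℕ) {τ₂ : V → ℕ}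
    (hx : IsStrictMinOn τ₂ B x) :
    ∃ τ : V → ℕ, SameOrderOn τ₁ τ A ∧ SameOrderOn τ₂ τ B ∧
      ∀ u ∈ A, ∀ v ∈ B, v ≠ x → τ u < τ v := by
  classical
  obtain ⟨N, hN⟩ := (finite_range τ₁).bddAbove
  replace hN : ∀ v, τ₁ v ≤ N := fun v => hN ⟨v, rfl⟩
  let τ := A.piecewise τ₁ fun v => τ₂ v + N + 1
  have hτA : EqOn τ τ₁ A := A.piecewise_eqOn _ _
  have hτB : ∀ v ∈ B, v ≠ x → τ v = τ₂ v + N + 1 := fun v hv hne =>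
    piecewise_eq_of_notMem _ _ _ fun hA => hne (hAB.subset ⟨hA, hv⟩)
  have hτx : τ x = τ₁ x := hτA (hAB.symm.subset rfl).1
  refine ⟨τ, .of_eqOn hτA.symm, fun u hu v hv => ?_, fun u hu v hv hne => ?_⟩
  · have := hN x
    rcases eq_or_ne x u with rfl | hxu <;> rcases eq_or_ne x v with rfl | hxv
    · simp only [lt_self_iff_false]
    · have := hx hv hxv.symm
      have := hτB v hv hxv.symm
      omega
    · have := hx hu hxu.symm
      have := hτB u hu hxu.symm
      omega
    · rw [hτB u hu hxu.symm, hτB v hv hxv.symm]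
      omega
  · have := hN u
    rw [hτA hu, hτB v hv hne]
    omega

lemma injOn_union_of_inter_eq {α : Type*} {f : V → α} (hAB : A ∩ B = {x}) (hA : InjOn f A)
    (hB : InjOn f B) (hne : ∀ u ∈ A, ∀ v ∈ B, v ≠ x → f u ≠ f v) : InjOn f (A ∪ B) := by
  rw [← union_sdiff_self, injOn_union disjoint_sdiff_right]
  refine ⟨hA, hB.mono sdiff_subset, fun u hu v hv => hne u hu v hv.1 ?_⟩
  rintro rfl
  exact hv.2 (hAB.symm.subset rfl).1

end Union

section Split

variable {V : Type*} {G : SimpleGraph V} {A B : Set V} {s x t : V}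

/-- `A` and `B` share just the vertex `x`, and all edges between them are within `A` or within `B`
except possibly the edge from `s ∈ A` to `t ∈ B`: the split of an outerplanar graph with root edge
`s t` at the apex `x` of the inner face at that edge. -/
structure IsSplit (G : SimpleGraph V) (A B : Set V) (s x t : V) : Prop where
  inter_eq : A ∩ B = {x}
  left_mem : s ∈ A
  right_mem : t ∈ B
  left_ne : s ≠ x
  ne_right : x ≠ t
  edge : ∀ u ∈ A, ∀ v ∈ B, G.Adj u v → u ∈ B ∨ v ∈ A ∨ u = s ∧ v = t

namespace IsSplit

lemma symm (h : IsSplit G A B s x t) : IsSplit G B A t x s where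
  inter_eq := inter_comm A B ▸ h.inter_eq
  left_mem := h.right_mem
  right_mem := h.left_mem
  left_ne := h.ne_right.symm
  ne_right := h.left_ne.symm
  edge u hu v hv e := by
    have := h.edge v hv u hu e.symm
    tauto

lemma apex_mem_left (h : IsSplit G A B s x t) : x ∈ A := (h.inter_eq.symm.subset rfl).1

lemma apex_mem_right (h : IsSplit G A B s x t) : x ∈ B := (h.inter_eq.symm.subset rfl).2

lemma eq_apex {v : V} (h : IsSplit G A B s x t) (hA : v ∈ A) (hB : v ∈ B) : v = x :=
  h.inter_eq.subset ⟨hA, hB⟩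

lemma right_notMem (h : IsSplit G A B s x t) : t ∉ A := fun ht =>
  h.ne_right (h.eq_apex ht h.right_mem).symm

lemma adj_cases {u v : V} (h : IsSplit G A B s x t) (hu : u ∈ A ∪ B) (hv : v ∈ A ∪ B)
    (e : G.Adj u v) :
    (u ∈ A ∧ v ∈ A) ∨ (u ∈ B ∧ v ∈ B) ∨ (u = s ∧ v = t) ∨ (u = t ∧ v = s) := by
  rcases hu with hu | hu <;> rcases hv with hv | hv
  · exact .inl ⟨hu, hv⟩
  · have := h.edge u hu v hv e
    tauto
  · have := h.edge v hv u hu e.symm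
    tauto
  · exact .inr (.inl ⟨hu, hv⟩)

variable {α : Type*} [LinearOrder α] {τ : V → α} {y : V → ℤ} {u v : V}

lemma mem_left_of_lt (h : IsSplit G A B s x t)
    (hτ : ∀ u ∈ A, ∀ v ∈ B, v ≠ x → v ≠ t → τ u < τ v) (hu : u ∈ A ∪ B) (hut : u ≠ t)
    (hv : v ∈ A) (huv : τ u < τ v) : u ∈ A := by
  by_contra huA
  have hux : u ≠ x := fun e => huA (e ▸ h.apex_mem_left)
  exact huv.asymm (hτ v hv u (hu.resolve_left huA) hux hut)

lemma eq_apex_of_lt (h : IsSplit G A B s x t) (hτ : ∀ u ∈ A, ∀ v ∈ B, v ≠ x → τ u < τ v)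
    (hlast : IsStrictMaxOn τ (A ∪ B) t) (hu : u ∈ B) (hv : v ∈ A) (huv : τ u < τ v) : u = x :=
  h.eq_apex (h.mem_left_of_lt (fun u hu v hv hvx _ => hτ u hu v hv hvx) (.inr hu)
    (hlast.ne_of_lt (.inl hv) huv) hv huv) hu

lemma not_blocks_union_of_last {T : ℤ} {i j a b : V} (h : IsSplit G A B s x t)
    (hA : IsRowLayout G A τ y) (hB : IsRowLayout G B τ y)
    (hτ : ∀ u ∈ A, ∀ v ∈ B, v ≠ x → τ u < τ v) (hlast : IsStrictMaxOn τ (A ∪ B) t)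
    (hexit : IsStrictMaxOn τ A x ∨ IsStrictMaxOn y A x ∨ IsStrictMinOn y A x)
    (hys : y s ≤ 1 ∨ T < y s) (hyt : y t = 0)
    (hmem : ∀ v ∈ A ∪ B, v ≠ s → v ≠ t → 1 ≤ y v ∧ y v ≤ T) (hi : i ∈ A ∪ B) (hj : j ∈ A ∪ B)
    (ha : a ∈ A ∪ B) (hb : b ∈ A ∪ B) (e : G.Adj i j) (f : G.Adj a b) (hib : τ i < τ b)
    (hbj : τ b < τ j) (hab : τ a < τ b) (hne : a ≠ i) : ¬ Blocks (y i) (y j) (y a) (y b) := by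
  intro hbl
  have mem_A : ∀ {u v}, u ∈ A ∪ B → v ∈ A → τ u < τ v → u ∈ A := fun hu hv huv =>
    h.mem_left_of_lt (fun u hu v hv hvx _ => hτ u hu v hv hvx) hu
      (hlast.ne_of_lt (.inl hv) huv) hv huv
  have hbi : b ≠ i := by rintro rfl; exact hib.false
  have hbt := hlast.ne_of_lt hj hbj
  have hat := hlast.ne_of_lt hb hab
  rcases h.adj_cases hi hj e with ⟨hi', hj'⟩ | ⟨hi', hj'⟩ | ⟨rfl, rfl⟩ | ⟨rfl, rfl⟩
  · have hb' := mem_A hb hj' hbj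
    exact hA.not_blocks hi' hj' (mem_A ha hb' hab) hb' e f hib hbj hab hne hbl
  · by_cases hbA : b ∈ A
    · obtain rfl := h.eq_apex_of_lt hτ hlast hi' hbA hib
      have haA := mem_A ha hbA hab
      unfold Blocks at hbl
      rcases hexit with h | h | h <;> have hb' := h hbA hbi <;> have ha' := h haA hne
      · exact hb'.asymm hib
      all_goals omega
    · have haB : a ∈ B := by
        have := h.adj_cases ha hb f
        tauto
      exact hB.not_blocks hi' hj' haB (hb.resolve_left hbA) e f hib hbj hab hne hbl
  · have := hmem b hb hbi hbt
    have := hmem a ha hne hat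
    unfold Blocks at hbl
    omega
  · exact hlast.ne_of_lt hb hib rfl

lemma isRowLayout_union_of_last {T : ℤ} (h : IsSplit G A B s x t) (hA : IsRowLayout G A τ y)
    (hB : IsRowLayout G B τ y) (hτ : ∀ u ∈ A, ∀ v ∈ B, v ≠ x → τ u < τ v)
    (hlast : IsStrictMaxOn τ (A ∪ B) t)
    (hexit : IsStrictMaxOn τ A x ∨ IsStrictMaxOn y A x ∨ IsStrictMinOn y A x)
    (hys : y s ≤ 1 ∨ T < y s) (hyt : y t = 0)
    (hmem : ∀ v ∈ A ∪ B, v ≠ s → v ≠ t → 1 ≤ y v ∧ y v ≤ T) :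
    IsRowLayout G (A ∪ B) τ y where
  injOn := injOn_union_of_inter_eq h.inter_eq hA.injOn hB.injOn
    fun u hu v hv hvx => (hτ u hu v hv hvx).ne
  row_ne i hi j hj k hk e h₁ h₂ hki hkj := by
    have hki' : k ≠ i := by rintro rfl; exact h₁.false
    have hkt := hlast.ne_of_lt hj h₂
    rcases h.adj_cases hi hj e with ⟨hi', hj'⟩ | ⟨hi', hj'⟩ | ⟨rfl, rfl⟩ | ⟨rfl, rfl⟩
    · have hkA := h.mem_left_of_lt (fun u hu v hv hvx _ => hτ u hu v hv hvx) hk hkt hj' h₂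
      exact hA.row_ne hi' hj' hkA e h₁ h₂ hki hkj
    · rcases hk with hk | hk
      · obtain rfl := h.eq_apex_of_lt hτ hlast hi' hk h₁
        rcases hexit with h | h | h <;> have := h hk hki' <;> order
      · exact hB.row_ne hi' hj' hk e h₁ h₂ hki hkj
    · have := hmem k hk hki' hkt
      omega
    · exact hlast.ne_of_lt hk h₁ rfl
  not_blocks _ hi _ hj _ ha _ hb :=
    h.not_blocks_union_of_last hA hB hτ hlast hexit hys hyt hmem hi hj ha hb

lemma eq_right_of_lt (h : IsSplit G A B s x t)
    (hτ : ∀ u ∈ A, ∀ v ∈ B, v ≠ x → v ≠ t → τ u < τ v) (hx : IsStrictMaxOn τ A x)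
    (hu : u ∈ B) (hv : v ∈ A) (huv : τ u < τ v) : u = t := by
  by_contra hut
  obtain rfl := h.eq_apex (h.mem_left_of_lt hτ (.inr hu) hut hv huv) hu
  exact hx.ne_of_lt hv huv rfl

lemma not_blocks_union_of_first {i j a b : V} (h : IsSplit G A B s x t) (hA : IsRowLayout G A τ y)
    (hB : IsRowLayout G B τ y) (hτ : ∀ u ∈ A, ∀ v ∈ B, v ≠ x → v ≠ t → τ u < τ v)
    (ht : IsStrictMinOn τ (A ∪ B) t) (hs : IsStrictMinOn τ A s) (hx : IsStrictMaxOn τ A x)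
    (hy : ∀ v ∈ A, y v < y t) (hi : i ∈ A ∪ B) (hj : j ∈ A ∪ B) (ha : a ∈ A ∪ B) (hb : b ∈ A ∪ B)
    (e : G.Adj i j) (f : G.Adj a b) (hib : τ i < τ b) (hbj : τ b < τ j) (hab : τ a < τ b)
    (hne : a ≠ i) : ¬ Blocks (y i) (y j) (y a) (y b) := by
  have hbt := ht.ne_of_lt hi hib
  rcases h.adj_cases hi hj e with ⟨hi', hj'⟩ | ⟨hi', hj'⟩ | ⟨rfl, rfl⟩ | ⟨rfl, rfl⟩
  · have hb' := h.mem_left_of_lt hτ hb hbt hj' hbj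
    have hat : a ≠ t := by
      rintro rfl
      rcases h.adj_cases ha hb f with ⟨haA, -⟩ | ⟨-, hbB⟩ | ⟨-, rfl⟩ | ⟨-, rfl⟩
      · exact h.right_notMem haA
      · exact hx.ne_of_lt hj' hbj (h.eq_apex hb' hbB)
      · exact hbt rfl
      · exact hs.ne_of_lt hi' hib rfl
    exact hA.not_blocks hi' hj' (h.mem_left_of_lt hτ ha hat hb' hab) hb' e f hib hbj hab hne
  · by_cases hbA : b ∈ A
    · obtain rfl := h.eq_right_of_lt hτ hx hi' hbA hib
      have := hy a (h.mem_left_of_lt hτ ha hne hbA hab)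
      have := hy b hbA
      unfold Blocks
      omega
    · have haB : a ∈ B := by
        rcases h.adj_cases ha hb f with hAA | hBB | ⟨-, rfl⟩ | ⟨rfl, -⟩
        · exact absurd hAA.2 hbA
        · exact hBB.1
        · exact absurd rfl hbt
        · exact h.right_mem
      exact hB.not_blocks hi' hj' haB (hb.resolve_left hbA) e f hib hbj hab hne
  · exact absurd rfl (ht.ne_of_lt hb hbj)
  · exact absurd rfl (hs.ne_of_lt (h.mem_left_of_lt hτ hb hbt h.left_mem hbj) hbj)

lemma isRowLayout_union_of_first (h : IsSplit G A B s x t) (hA : IsRowLayout G A τ y)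
    (hB : IsRowLayout G B τ y) (hτ : ∀ u ∈ A, ∀ v ∈ B, v ≠ x → v ≠ t → τ u < τ v)
    (ht : IsStrictMinOn τ (A ∪ B) t) (hs : IsStrictMinOn τ A s) (hx : IsStrictMaxOn τ A x)
    (hy : ∀ v ∈ A, y v < y t) : IsRowLayout G (A ∪ B) τ y where
  injOn := by
    refine injOn_union_of_inter_eq h.inter_eq hA.injOn hB.injOn fun u hu v hv hvx => ?_
    rcases eq_or_ne v t with rfl | hvt
    · exact (ht (.inl hu) (ne_of_mem_of_not_mem hu h.right_notMem)).ne'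
    · exact (hτ u hu v hv hvx hvt).ne
  row_ne i hi j hj k hk e h₁ h₂ hki hkj := by
    rcases h.adj_cases hi hj e with ⟨hi', hj'⟩ | ⟨hi', hj'⟩ | ⟨rfl, rfl⟩ | ⟨rfl, rfl⟩
    · exact hA.row_ne hi' hj' (h.mem_left_of_lt hτ hk (ht.ne_of_lt hi h₁) hj' h₂) e h₁ h₂ hki hkj
    · rcases hk with hk | hk
      · obtain rfl := h.eq_right_of_lt hτ hx hi' hk h₁
        exact (hy k hk).ne hki
      · exact hB.row_ne hi' hj' hk e h₁ h₂ hki hkj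
    · exact ht.ne_of_lt hk h₂ rfl
    · exact (hy j h.left_mem).ne (hkj.symm.trans hki)
  not_blocks _ hi _ hj _ ha _ hb := h.not_blocks_union_of_first hA hB hτ ht hs hx hy hi hj ha hb

end IsSplit

end Split

section BoundedLayout

variable {V : Type*} {G : SimpleGraph V} {A B S : Set V} {s x t : V} {T T' σ ρ : ℤ} {τ : V → ℕ}
  {y : V → ℤ}

/-- A row layout running from `s` to `t` in rows `1, …, T`, except that `s` is in row `σ` and `t` in
the extra row `0`. -/
structure IsSpanLayout (G : SimpleGraph V) (S : Set V) (s t : V) (T σ : ℤ) (τ : V → ℕ) (y : V → ℤ) :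
    Prop extends IsRowLayout G S τ y where
  first : IsStrictMinOn τ S s
  last : IsStrictMaxOn τ S t
  row_first : y s = σ
  row_last : y t = 0
  row_mem : ∀ v ∈ S, v ≠ s → v ≠ t → 1 ≤ y v ∧ y v ≤ T

/-- A row layout in rows `0, …, T` that starts with `s` in the bottom row and `t` in the top row. -/
structure IsLeadLayout (G : SimpleGraph V) (S : Set V) (s t : V) (T : ℤ) (τ : V → ℕ) (y : V → ℤ) :
    Prop extends IsRowLayout G S τ y where
  lead : IsLeadingPair τ S s t
  row_left : y s = 0
  row_right : y t = T
  row_mem : ∀ v ∈ S, 0 ≤ y v ∧ y v ≤ T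

/-- A row layout in rows `1, …, T` that starts with `s` in row `σ`, possibly outside these rows, and
that can be continued to the right from `x`, which is in row `ρ`: nothing is to the right of `x`, or
all of the layout is strictly below `x`, or all of it is strictly above `x`. -/
structure IsInitialLayout (G : SimpleGraph V) (S : Set V) (s x : V) (T σ ρ : ℤ) (τ : V → ℕ)
    (y : V → ℤ) : Prop extends IsRowLayout G S τ y where
  first : IsStrictMinOn τ S s
  exit : IsStrictMaxOn τ S x ∨ IsStrictMaxOn y S x ∨ IsStrictMinOn y S x
  row_first : y s = σ
  row_exit : y x = ρ
  row_mem : ∀ v ∈ S, v ≠ s → 1 ≤ y v ∧ y v ≤ T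

/-- Existence of a layout as in `IsSpanLayout`. -/
def HasSpanLayout (G : SimpleGraph V) (S : Set V) (s t : V) (T σ : ℤ) : Prop :=
  ∃ τ y, IsSpanLayout G S s t T σ τ y

/-- Existence of a layout as in `IsLeadLayout`. -/
def HasLeadLayout (G : SimpleGraph V) (S : Set V) (s t : V) (T : ℤ) : Prop :=
  ∃ τ y, IsLeadLayout G S s t T τ y

/-- Existence of a layout as in `IsInitialLayout`. -/
def HasInitialLayout (G : SimpleGraph V) (S : Set V) (s x : V) (T σ ρ : ℤ) : Prop :=
  ∃ τ y, IsInitialLayout G S s x T σ ρ τ y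

lemma hasSpanLayout_pair (h : s ≠ t) : HasSpanLayout G {s, t} s t T σ := by
  classical
  have hτ : (Pi.single t 1 : V → ℕ) s < (Pi.single t 1 : V → ℕ) t := by simp [h]
  refine ⟨Pi.single t 1, Pi.single s σ, isRowLayout_pair _ _ hτ, ?_, ?_, ?_, ?_, ?_⟩
  · rintro v (rfl | rfl) hv
    exacts [absurd rfl hv, hτ]
  · rintro v (rfl | rfl) hv
    exacts [hτ, absurd rfl hv]
  · simp only [Pi.single_eq_same]
  · simp only [Pi.single_eq_of_ne h.symm]
  · rintro v (rfl | rfl) hvs hvt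
    exacts [absurd rfl hvs, absurd rfl hvt]

lemma hasLeadLayout_pair (h : s ≠ t) (hT : 0 ≤ T) : HasLeadLayout G {s, t} s t T := by
  classical
  have hs : (Pi.single t T : V → ℤ) s = 0 := by
    simp only [Pi.single_eq_of_ne h]
  have ht : (Pi.single t T : V → ℤ) t = T := by
    simp only [Pi.single_eq_same]
  refine ⟨Pi.single t 1, Pi.single t T, isRowLayout_pair _ _ (by simp [h]), ?_, hs, ht, ?_⟩
  · rintro v (rfl | rfl) hvs hvt
    exacts [absurd rfl hvs, absurd rfl hvt]
  · rintro v (rfl | rfl) <;> omega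

lemma HasSpanLayout.mono (h : HasSpanLayout G S s t T σ) (hT : T ≤ T') :
    HasSpanLayout G S s t T' σ := by
  obtain ⟨τ, y, h⟩ := h
  exact ⟨τ, y, { h with
    row_mem := fun v hv hvs hvt => (h.row_mem v hv hvs hvt).imp_right (le_trans · hT) }⟩

lemma HasLeadLayout.symm (h : HasLeadLayout G S s t T) : HasLeadLayout G S t s T := by
  obtain ⟨τ, y, h⟩ := h
  refine ⟨τ, fun v => T - y v, h.const_sub T, h.lead.symm, ?_, ?_, fun v hv => ?_⟩
  · rw [h.row_right, sub_self]
  · rw [h.row_left, sub_zero]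
  · have := h.row_mem v hv
    omega

lemma HasSpanLayout.hasInitialLayout (h : HasSpanLayout G S s x (T - 1) σ) (hT : 1 ≤ T) :
    HasInitialLayout G S s x T (σ + 1) 1 := by
  obtain ⟨τ, y, h⟩ := h
  refine ⟨τ, fun v => y v + 1, h.congr (fun _ _ _ _ => Iff.rfl) fun _ _ _ _ => by omega, h.first,
    .inl h.last, congrArg (· + 1) h.row_first, congrArg (· + 1) h.row_last, fun v hv hvs => ?_⟩
  rcases eq_or_ne v x with rfl | hvx
  · rw [h.row_last]
    omega
  · have := h.row_mem v hv hvs hvx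
    omega

-- The order starts with `s`, and `x` is raised to a top row of its own.
lemma HasLeadLayout.hasInitialLayout (h : HasLeadLayout G S s x (T - 2)) (hsx : s ≠ x)
    (hT : 3 ≤ T) : HasInitialLayout G S s x T 1 T := by
  classical
  obtain ⟨τ, y, h⟩ := h
  have hy : y s ≠ y x := by
    rw [h.row_left, h.row_right]
    omega
  have hraise : IsRowLayout G S (moveFront τ s) (Function.update y x (T - 1)) := by
    refine (isRowLayout_moveFront h.toIsRowLayout h.lead hy).update_of_gt
      (isLeadingPair_moveFront h.lead).symm (fun v hv => ?_) ?_ <;> rw [h.row_right]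
    exacts [(h.row_mem v hv).2, by omega]
  refine ⟨moveFront τ s, fun v => Function.update y x (T - 1) v + 1,
    hraise.congr (fun _ _ _ _ => Iff.rfl) fun _ _ _ _ => by omega, isStrictMinOn_moveFront,
    .inr (.inl fun v hv hvx => ?_), ?_, ?_, fun v hv _ => ?_⟩
  · have := h.row_mem v hv
    simp only [Function.update_self, Function.update_of_ne hvx]
    omega
  · simp only [Function.update_of_ne hsx, h.row_left, zero_add]
  · simp only [Function.update_self, sub_add_cancel]
  · have := h.row_mem v hv
    rcases eq_or_ne v x with rfl | hvx
    · simp only [Function.update_self]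
      omega
    · simp only [Function.update_of_ne hvx]
      omega

namespace HasInitialLayout

lemma flip (h : HasInitialLayout G S s x T σ ρ) :
    HasInitialLayout G S s x T (T + 1 - σ) (T + 1 - ρ) := by
  obtain ⟨τ, y, h⟩ := h
  refine ⟨τ, fun v => T + 1 - y v, h.const_sub (T + 1), h.first, ?_,
    congrArg (T + 1 - ·) h.row_first, congrArg (T + 1 - ·) h.row_exit, fun v hv hvs => ?_⟩
  · rcases h.exit with hx | hx | hx
    · exact .inl hx
    · exact .inr (.inr fun v hv hvx => sub_lt_sub_left (hx hv hvx) _)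
    · exact .inr (.inl fun v hv hvx => sub_lt_sub_left (hx hv hvx) _)
  · have := h.row_mem v hv hvs
    omega

lemma lower_start (h : HasInitialLayout G S s x T 1 ρ) (hs : s ∈ S) (hx : x ∈ S) (hsx : s ≠ x) :
    HasInitialLayout G S s x T 0 ρ := by
  classical
  obtain ⟨τ, y, h⟩ := h
  have hmin : ∀ v ∈ S, y s ≤ y v := fun v hv => by
    rcases eq_or_ne v s with rfl | hvs
    · exact le_rfl
    · exact h.row_first ▸ (h.row_mem v hv hvs).1
  have hlt : (0 : ℤ) < y s := by rw [h.row_first]; exact zero_lt_one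
  have hyx : Function.update y s 0 x = y x := Function.update_of_ne hsx.symm _ _
  refine ⟨τ, Function.update y s 0, h.update_of_lt h.first.isLeadingPair hmin hlt, h.first, ?_,
    Function.update_self s 0 y, hyx.trans h.row_exit, fun v hv hvs => ?_⟩
  · rcases h.exit with hlast | hmax | hmin'
    · exact .inl hlast
    · refine .inr (.inl fun v hv hvx => ?_)
      rw [hyx]
      rcases eq_or_ne v s with rfl | hvs
      · rw [Function.update_self]
        exact hlt.trans (hmax hv hvx)
      · rw [Function.update_of_ne hvs]
        exact hmax hv hvx
    · exact absurd (hmin' hs hsx) (hmin x hx).not_gt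
  · rw [Function.update_of_ne hvs]
    exact h.row_mem v hv hvs

end HasInitialLayout

namespace IsSplit

variable [Finite V]

lemma hasSpanLayout_union (h : IsSplit G A B s x t) (hA : HasInitialLayout G A s x T σ ρ)
    (hB : HasSpanLayout G B x t T ρ) (hσ : σ = 0 ∨ σ = 1 ∨ σ = T + 1) :
    HasSpanLayout G (A ∪ B) s t T σ := by
  obtain ⟨τ₁, y₁, hA⟩ := hA
  obtain ⟨τ₂, y₂, hB⟩ := hB
  have hxA := h.apex_mem_left
  obtain ⟨τ, τA, τB, τAB⟩ := exists_order_union h.inter_eq τ₁ hB.first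
  obtain ⟨y, yA, yB⟩ := exists_eqOn_union h.inter_eq (hA.row_exit.trans hB.row_first.symm)
  have ys : y s = σ := (yA h.left_mem).trans hA.row_first
  have yt : y t = 0 := (yB h.right_mem).trans hB.row_last
  have hfirst : IsStrictMinOn τ (A ∪ B) s := by
    intro v hv hvs
    by_cases hvA : v ∈ A
    · exact hA.first.congr τA h.left_mem hvA hvs
    · exact τAB s h.left_mem v (hv.resolve_left hvA) (ne_of_mem_of_not_mem hxA hvA).symm
  have hlast : IsStrictMaxOn τ (A ∪ B) t := by
    rintro v (hv | hv) hvt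
    · exact τAB v hv t h.right_mem h.ne_right.symm
    · exact hB.last.congr τB h.right_mem hv hvt
  have hmem : ∀ v ∈ A ∪ B, v ≠ s → v ≠ t → 1 ≤ y v ∧ y v ≤ T := by
    intro v hv hvs hvt
    by_cases hvA : v ∈ A
    · rw [yA hvA]
      exact hA.row_mem v hvA hvs
    · have hvB := hv.resolve_left hvA
      rw [yB hvB]
      exact hB.row_mem v hvB (ne_of_mem_of_not_mem hxA hvA).symm hvt
  have hyA : SameOrderOn y₁ y A := .of_eqOn yA.symm
  have hexit := hA.exit.imp (·.congr τA hxA) (Or.imp (·.congr hyA hxA) (·.congr hyA hxA))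
  exact ⟨τ, y, h.isRowLayout_union_of_last (T := T) (hA.congr τA hyA)
    (hB.congr τB (.of_eqOn yB.symm)) τAB hlast hexit (by omega) yt hmem, hfirst, hlast, ys, yt,
    hmem⟩

lemma hasLeadLayout_union (h : IsSplit G A B s x t) (hA : HasSpanLayout G A s x (T - 1) 0)
    (hB : HasLeadLayout G B x t T) (hT : 1 ≤ T) : HasLeadLayout G (A ∪ B) s t T := by
  classical
  obtain ⟨τ₁, y₁, hA⟩ := hA
  obtain ⟨τ₂, y₂, hB⟩ := hB
  have hxA := h.apex_mem_left
  obtain ⟨τ, τA, τB, τAB⟩ := exists_order_union h.inter_eq τ₁ (isStrictMinOn_moveFront (τ := τ₂))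
  obtain ⟨y, yA, yB⟩ := exists_eqOn_union h.inter_eq (hA.row_last.trans hB.row_left.symm)
  have ys : y s = 0 := (yA h.left_mem).trans hA.row_first
  have yx : y x = 0 := (yA hxA).trans hA.row_last
  have yt : y t = T := (yB h.right_mem).trans hB.row_right
  have hyA : ∀ v ∈ A, 0 ≤ y v ∧ y v < T := by
    intro v hv
    rcases eq_or_ne v s with rfl | hvs
    · omega
    rcases eq_or_ne v x with rfl | hvx
    · omega
    have := yA hv ▸ hA.row_mem v hv hvs hvx
    omega
  have hτ : ∀ u ∈ A, ∀ v ∈ B, v ≠ x → v ≠ t → moveFront τ t u < moveFront τ t v :=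
    fun u hu v hv hvx hvt => (moveFront_lt_iff (ne_of_mem_of_not_mem hu h.right_notMem) hvt).2
      (τAB u hu v hv hvx)
  have τA' : SameOrderOn τ₁ (moveFront τ t) A := fun u hu v hv =>
    (sameOrderOn_moveFront h.right_notMem hu hv).trans (τA hu hv)
  have hB' : IsRowLayout G B τ y := (isRowLayout_moveFront hB.toIsRowLayout hB.lead (by
    rw [hB.row_left, hB.row_right]; omega)).congr τB (.of_eqOn yB.symm)
  have hlead : IsLeadingPair τ B x t :=
    (isLeadingPair_moveFront hB.lead).congr τB h.apex_mem_right h.right_mem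
  have hs := hA.first.congr τA' h.left_mem
  refine ⟨moveFront τ t, y, h.isRowLayout_union_of_first (hA.congr τA' (.of_eqOn yA.symm))
    (isRowLayout_moveFront hB' hlead.symm (by omega)) hτ isStrictMinOn_moveFront hs
    (hA.last.congr τA' hxA) fun v hv => yt ▸ (hyA v hv).2, ?_, ys, yt, ?_⟩
  · refine fun v hv hvs hvt => ⟨?_, moveFront_self_lt hvt⟩
    by_cases hvA : v ∈ A
    · exact hs hvA hvs
    · exact hτ s h.left_mem v (hv.resolve_left hvA) (ne_of_mem_of_not_mem hxA hvA).symm hvt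
  · rintro v (hv | hv)
    · exact (hyA v hv).imp_right le_of_lt
    · exact yB hv ▸ hB.row_mem v hv

end IsSplit

end BoundedLayout

section RootedPiece

variable {V : Type*} {G : SimpleGraph V} {A B S : Set V} {s x t : V} {m M : ℕ} {L T σ : ℤ}

/-- `IsRootedPiece G S s t m` states that the graph `G` on `S`, with root edge `s t` (present or
not), decomposes recursively into `m` single edges by splits as in `IsSplit`. -/
inductive IsRootedPiece (G : SimpleGraph V) : Set V → V → V → ℕ → Prop
  | pair {s t : V} (h : s ≠ t) : IsRootedPiece G {s, t} s t 1
  | union {A B : Set V} {s x t : V} {m n : ℕ} (h : IsSplit G A B s x t)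
      (hA : IsRootedPiece G A s x m) (hB : IsRootedPiece G B x t n) :
      IsRootedPiece G (A ∪ B) s t (m + n)

namespace IsRootedPiece

lemma one_le (h : IsRootedPiece G S s t m) : 1 ≤ m := by
  induction h with
  | pair => exact le_rfl
  | union _ _ _ ihA _ => exact ihA.trans (Nat.le_add_right _ _)

lemma symm (h : IsRootedPiece G S s t m) : IsRootedPiece G S t s m := by
  induction h with
  | pair h => exact pair_comm _ _ ▸ pair h.symm
  | union h _ _ ihA ihB =>
    rw [union_comm, add_comm]
    exact union h.symm ihB ihA

end IsRootedPiece

/-- All rooted pieces of size at most `M` have span layouts whenever there are at least `L` regular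
rows, with the starting vertex in any of the rows `0`, `1` and `T + 1`. -/
def AllSpanLayouts (G : SimpleGraph V) (M : ℕ) (L : ℤ) : Prop :=
  ∀ ⦃S s t m⦄, IsRootedPiece G S s t m → m ≤ M → ∀ ⦃T⦄, L ≤ T →
    ∀ ⦃σ⦄, σ = 0 ∨ σ = 1 ∨ σ = T + 1 → HasSpanLayout G S s t T σ

variable [Finite V]

lemma IsSplit.hasSpanLayout_union_of_left (h : IsSplit G A B s x t) (hT : 1 ≤ T)
    (hA : ∀ ρ, ρ = 0 ∨ ρ = T → HasSpanLayout G A s x (T - 1) ρ) (hB : HasSpanLayout G B x t T 1)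
    (hσ : σ = 0 ∨ σ = 1 ∨ σ = T + 1) : HasSpanLayout G (A ∪ B) s t T σ := by
  refine h.hasSpanLayout_union ?_ hB hσ
  have h₁ : HasInitialLayout G A s x T 1 1 := (hA 0 (.inl rfl)).hasInitialLayout hT
  rcases hσ with rfl | rfl | rfl
  · exact h₁.lower_start h.left_mem h.apex_mem_left h.left_ne
  · exact h₁
  · exact (hA T (.inr rfl)).hasInitialLayout hT

lemma IsSplit.hasSpanLayout_union_of_right (h : IsSplit G A B s x t) (hT : 3 ≤ T)
    (hA : HasLeadLayout G A s x (T - 2)) (hB : ∀ ρ, ρ = 1 ∨ ρ = T → HasSpanLayout G B x t T ρ)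
    (hσ : σ = 0 ∨ σ = 1 ∨ σ = T + 1) : HasSpanLayout G (A ∪ B) s t T σ := by
  have h₁ : HasInitialLayout G A s x T 1 T := hA.hasInitialLayout h.left_ne hT
  have h₀ : HasInitialLayout G A s x T 0 T :=
    h₁.lower_start h.left_mem h.apex_mem_left h.left_ne
  have htop : HasInitialLayout G A s x T (T + 1) 1 := by simpa using h₀.flip
  rcases hσ with rfl | rfl | rfl
  · exact h.hasSpanLayout_union h₀ (hB T (.inr rfl)) (.inl rfl)
  · exact h.hasSpanLayout_union h₁ (hB T (.inr rfl)) (.inr (.inl rfl))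
  · exact h.hasSpanLayout_union htop (hB 1 (.inl rfl)) (.inr (.inr rfl))

namespace AllSpanLayouts

lemma hasLeadLayout (hL : 0 ≤ L) (hspan : AllSpanLayouts G M L) (h : IsRootedPiece G S s t m)
    (hm : m ≤ 2 * M) (hT : L + 1 ≤ T) : HasLeadLayout G S s t T := by
  induction h with
  | pair h => exact hasLeadLayout_pair h (by omega)
  | @union A B s x t m n h hA hB ihA ihB =>
    rcases le_or_gt m M with hlight | hheavy
    · exact h.hasLeadLayout_union (hspan hA hlight (by omega) (.inl rfl)) (ihB (by omega))
        (by omega)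
    · rw [union_comm]
      exact (h.symm.hasLeadLayout_union (hspan hB.symm (by omega) (by omega) (.inl rfl))
        (ihA (by omega)).symm (by omega)).symm

lemma two_mul (hL : 0 ≤ L) (hspan : AllSpanLayouts G M L) : AllSpanLayouts G (2 * M) (L + 3) := by
  intro S s t m h hm T hT
  induction h with
  | pair h => exact fun _ _ => hasSpanLayout_pair h
  | @union A B s x t m n h hA hB _ ihB =>
    intro σ hσ
    rcases le_or_gt m M with hlight | hheavy
    · exact h.hasSpanLayout_union_of_left (by omega)
        (fun ρ hρ => hspan hA hlight (by omega) (by omega)) (ihB (by omega) (.inr (.inl rfl))) hσ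
    · have hlightB : n ≤ M := by omega
      refine h.hasSpanLayout_union_of_right (by omega)
        (hspan.hasLeadLayout hL hA (by omega) (by omega)) (fun ρ hρ => ?_) hσ
      exact (hspan hB hlightB (T := T - 1) (by omega) (by omega)).mono (by omega)

end AllSpanLayouts

lemma allSpanLayouts_two_pow (G : SimpleGraph V) (k : ℕ) : AllSpanLayouts G (2 ^ k) (3 * k) := by
  induction k with
  | zero =>
    intro S s t m h hm T _ σ _
    cases h with
    | pair h => exact hasSpanLayout_pair h
    | union _ hA hB =>
      have := hA.one_le
      have := hB.one_le
      omega
  | succ k ih => simpa only [pow_succ', Nat.cast_succ, mul_add_one] using ih.two_mul (by positivity)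

end RootedPiece

section Geometry

lemma eq_left_of_mem_segment {𝕜 E : Type*} [Field 𝕜] [LinearOrder 𝕜] [IsStrictOrderedRing 𝕜]
    [AddCommGroup E] [Module 𝕜 E] (f : E →ₗ[𝕜] 𝕜) {p q z : E} (hz : z ∈ segment 𝕜 p q)
    (hpq : f p ≠ f q) (hfz : f z = f p) : z = p := by
  rw [segment_eq_image'] at hz
  obtain ⟨θ, -, rfl⟩ := hz
  have hθ : θ * (f q - f p) = 0 := by
    simpa only [map_add, map_smul, map_sub, smul_eq_mul, add_eq_left] using hfz
  rcases mul_eq_zero.1 hθ with rfl | hfpq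
  · simp only [zero_smul, add_zero]
  · exact absurd (sub_eq_zero.1 hfpq).symm hpq

lemma mul_sub_eq_mul_sub_of_mem_segment {p q z : Pt} (hz : z ∈ segment ℝ p q) :
    (z.2 - p.2) * (q.1 - p.1) = (q.2 - p.2) * (z.1 - p.1) := by
  rw [segment_eq_image'] at hz
  obtain ⟨θ, -, rfl⟩ := hz
  simp only [Prod.fst_add, Prod.snd_add, Prod.smul_fst, Prod.smul_snd, Prod.fst_sub, Prod.snd_sub,
    smul_eq_mul]
  ring

variable {V : Type*} {G : SimpleGraph V} {x y : V → ℤ} {z : Pt} {i j k a b : V}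

/-- The position of a vertex `v` in column `x v` and row `y v`. -/
def gridPoint (x y : V → ℤ) (v : V) : Pt := (x v, y v)

lemma fst_mem_Icc_of_mem_segment (hij : x i < x j)
    (hz : z ∈ segment ℝ (gridPoint x y i) (gridPoint x y j)) : z.1 ∈ Icc (x i : ℝ) (x j) := by
  have hz' : z.1 ∈ segment ℝ (x i : ℝ) (x j) := (Prod.segment_subset _ _ hz).1
  rwa [segment_eq_uIcc, uIcc_of_le (Int.cast_le.2 hij.le)] at hz'

lemma snd_mem_uIcc_of_mem_segment (hz : z ∈ segment ℝ (gridPoint x y i) (gridPoint x y j)) :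
    z.2 ∈ uIcc (y i : ℝ) (y j) := by
  rw [← segment_eq_uIcc]
  exact (Prod.segment_subset _ _ hz).2

/-- A row layout with columns `x` for which an edge that has reached the column of any vertex before
its right endpoint is still less than one row away from its left endpoint. -/
structure IsSpreadLayout (G : SimpleGraph V) (x y : V → ℤ) : Prop extends
    IsRowLayout G univ x y where
  spread : ∀ ⦃i j k⦄, x i ≤ x k → x k < x j → |y j - y i| * (x k - x i) < x j - x i

namespace IsSpreadLayout

lemma injective (h : IsSpreadLayout G x y) : Function.Injective x := injOn_univ.1 h.injOn

lemma gridPoint_injective (h : IsSpreadLayout G x y) : Function.Injective (gridPoint x y) :=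
  fun _ _ e => h.injective (Int.cast_injective (congrArg Prod.fst e))

lemma abs_snd_sub_lt_one (h : IsSpreadLayout G x y) (hik : x i ≤ x k) (hkj : x k < x j)
    (hz : z ∈ segment ℝ (gridPoint x y i) (gridPoint x y j)) (hzk : z.1 ≤ x k) :
    |z.2 - y i| < 1 := by
  have hij : (0 : ℝ) < x j - x i := sub_pos.2 (Int.cast_lt.2 (hik.trans_lt hkj))
  have hzi : (0 : ℝ) ≤ z.1 - x i :=
    sub_nonneg.2 (fst_mem_Icc_of_mem_segment (hik.trans_lt hkj) hz).1
  have hline : (z.2 - y i) * (x j - x i : ℝ) = (y j - y i) * (z.1 - x i) :=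
    mul_sub_eq_mul_sub_of_mem_segment hz
  refine lt_of_mul_lt_mul_right ?_ hij.le
  calc |z.2 - y i| * (x j - x i : ℝ) = |(y j - y i : ℝ)| * (z.1 - x i) := by
        rw [← abs_of_pos hij, ← abs_mul, hline, abs_mul, abs_of_nonneg hzi]
    _ ≤ |(y j - y i : ℝ)| * (x k - x i) := by gcongr
    _ < 1 * (x j - x i : ℝ) := by
        rw [one_mul]
        exact_mod_cast h.spread hik hkj

lemma gridPoint_notMem_segment_of_lt (h : IsSpreadLayout G x y) (e : G.Adj i j) (hij : x i < x j)
    (hki : k ≠ i) (hkj : k ≠ j) :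
    gridPoint x y k ∉ segment ℝ (gridPoint x y i) (gridPoint x y j) := by
  intro hz
  have hx := fst_mem_Icc_of_mem_segment hij hz
  have hik : x i < x k := (Int.cast_le.1 hx.1).lt_of_ne (h.injective.ne hki.symm)
  have hkj : x k < x j := (Int.cast_le.1 hx.2).lt_of_ne (h.injective.ne hkj)
  have hyk : y k = y i := by
    have hnear : |(y k - y i : ℝ)| < 1 := h.abs_snd_sub_lt_one hik.le hkj hz le_rfl
    have hlt : |y k - y i| < 1 := by exact_mod_cast hnear
    exact sub_eq_zero.1 (Int.abs_lt_one_iff.1 hlt)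
  by_cases hyij : y i = y j
  · exact h.row_ne trivial trivial trivial e hik hkj hyk (hyk.trans hyij)
  · exact hki (h.gridPoint_injective (eq_left_of_mem_segment (LinearMap.snd ℝ ℝ ℝ) hz
      (Int.cast_injective.ne hyij) (congrArg Int.cast hyk)))

lemma gridPoint_notMem_segment (h : IsSpreadLayout G x y) (e : G.Adj i j) (hki : k ≠ i)
    (hkj : k ≠ j) : gridPoint x y k ∉ segment ℝ (gridPoint x y i) (gridPoint x y j) := by
  rcases (h.injective.ne e.ne).lt_or_gt with hij | hji
  · exact h.gridPoint_notMem_segment_of_lt e hij hki hkj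
  · rw [segment_symm]
    exact h.gridPoint_notMem_segment_of_lt e.symm hji hkj hki

lemma eq_gridPoint_of_mem_segments (h : IsSpreadLayout G x y) (e : G.Adj i j) (f : G.Adj i k)
    (hjk : j ≠ k) (hzj : z ∈ segment ℝ (gridPoint x y i) (gridPoint x y j))
    (hzk : z ∈ segment ℝ (gridPoint x y i) (gridPoint x y k)) : z = gridPoint x y i := by
  by_contra hzi
  have hray : SameRay ℝ (gridPoint x y j -ᵥ gridPoint x y i) (gridPoint x y k -ᵥ gridPoint x y i) :=
    (mem_segment_iff_wbtw.1 hzj).sameRay_vsub_left.symm.trans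
      (mem_segment_iff_wbtw.1 hzk).sameRay_vsub_left fun h0 => absurd (vsub_eq_zero_iff_eq.1 h0) hzi
  rcases wbtw_total_of_sameRay_vsub_left hray with hw | hw
  · exact h.gridPoint_notMem_segment f e.ne' hjk (mem_segment_iff_wbtw.2 hw)
  · exact h.gridPoint_notMem_segment e f.ne' hjk.symm (mem_segment_iff_wbtw.2 hw)

lemma snd_eq_of_mem_segments (h : IsSpreadLayout G x y) (e : G.Adj i j) (f : G.Adj a b)
    (hib : x i < x b) (hbj : x b < x j) (hab : x a < x b) (hai : a ≠ i)
    (hz : z ∈ segment ℝ (gridPoint x y i) (gridPoint x y j))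
    (hz' : z ∈ segment ℝ (gridPoint x y a) (gridPoint x y b)) : z.2 = y i := by
  have hnear := abs_lt.1 (h.abs_snd_sub_lt_one hib.le hbj hz (fst_mem_Icc_of_mem_segment hab hz').2)
  have hblocks := h.not_blocks trivial trivial trivial trivial e f hib hbj hab hai
  have hzij := snd_mem_uIcc_of_mem_segment hz
  obtain ⟨hmin, hmax⟩ := snd_mem_uIcc_of_mem_segment hz'
  unfold Blocks at hblocks
  rcases le_total (y i) (y j) with hy | hy
  · rw [uIcc_of_le (Int.cast_le.2 hy)] at hzij
    have h₁ : min (y a) (y b) < y i + 1 := by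
      exact_mod_cast hmin.trans_lt (sub_lt_iff_lt_add'.1 hnear.2)
    have h₂ : max (y a) (y b) ≤ y i := by omega
    exact le_antisymm (hmax.trans (by exact_mod_cast h₂)) hzij.1
  · rw [uIcc_of_ge (Int.cast_le.2 hy)] at hzij
    have h₁ : y i - 1 < max (y a) (y b) := by
      have : (y i : ℝ) - 1 < z.2 := by linarith
      exact_mod_cast this.trans_le hmax
    have h₂ : y i ≤ min (y a) (y b) := by omega
    exact le_antisymm hzij.2 (hmin.trans' (by exact_mod_cast h₂))

lemma disjoint_segment_of_lt (h : IsSpreadLayout G x y) (e : G.Adj i j) (f : G.Adj a b)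
    (hij : x i < x j) (hab : x a < x b) (hbj : x b < x j) (hai : a ≠ i) (hbi : b ≠ i) :
    Disjoint (segment ℝ (gridPoint x y i) (gridPoint x y j))
      (segment ℝ (gridPoint x y a) (gridPoint x y b)) := by
  rw [Set.disjoint_left]
  intro z hz hz'
  have hib : x i < x b :=
    (Int.cast_le.1 ((fst_mem_Icc_of_mem_segment hij hz).1.trans
      (fst_mem_Icc_of_mem_segment hab hz').2)).lt_of_ne (h.injective.ne hbi.symm)
  have hzi := h.snd_eq_of_mem_segments e f hib hbj hab hai hz hz'
  by_cases hyij : y i = y j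
  · have hrow := h.row_ne trivial trivial trivial e hib hbj
    have hblocks := h.not_blocks trivial trivial trivial trivial e f hib hbj hab hai
    obtain ⟨hmin, hmax⟩ := snd_mem_uIcc_of_mem_segment hz'
    have h₁ : min (y a) (y b) ≤ y i := by exact_mod_cast hmin.trans_eq hzi
    have h₂ : y i ≤ max (y a) (y b) := by exact_mod_cast hzi.symm.trans_le hmax
    unfold Blocks at hblocks
    omega
  · obtain rfl := eq_left_of_mem_segment (LinearMap.snd ℝ ℝ ℝ) hz (Int.cast_injective.ne hyij) hzi
    exact h.gridPoint_notMem_segment f hai.symm hbi.symm hz'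

lemma disjoint_segment (h : IsSpreadLayout G x y) (e : G.Adj i j) (f : G.Adj a b)
    (hai : a ≠ i) (haj : a ≠ j) (hbi : b ≠ i) (hbj : b ≠ j) :
    Disjoint (segment ℝ (gridPoint x y i) (gridPoint x y j))
      (segment ℝ (gridPoint x y a) (gridPoint x y b)) := by
  wlog hij : x i < x j generalizing i j
  · rw [segment_symm ℝ (gridPoint x y i)]
    exact this e.symm haj hai hbj hbi ((h.injective.ne e.ne').lt_of_le (not_lt.1 hij))
  wlog hab : x a < x b generalizing a b
  · rw [segment_symm ℝ (gridPoint x y a)]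
    exact this f.symm hbi hbj hai haj ((h.injective.ne f.ne').lt_of_le (not_lt.1 hab))
  rcases (h.injective.ne hbj).lt_or_gt with hlt | hgt
  · exact h.disjoint_segment_of_lt e f hij hab hlt hai hbi
  · exact (h.disjoint_segment_of_lt f e hab hij hgt hai.symm haj.symm).symm

lemma segment_inter_segment_subset (h : IsSpreadLayout G x y) (e : G.Adj i j) (f : G.Adj a b)
    (hne : s(i, j) ≠ s(a, b)) :
    segment ℝ (gridPoint x y i) (gridPoint x y j) ∩ segment ℝ (gridPoint x y a) (gridPoint x y b) ⊆
      gridPoint x y '' ({i, j} ∩ {a, b}) := by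
  rintro z ⟨hz, hz'⟩
  rw [ne_eq, Sym2.eq_iff, not_or, not_and_or, not_and_or] at hne
  by_cases hai : a = i
  · subst hai
    exact ⟨a, ⟨.inl rfl, .inl rfl⟩, (h.eq_gridPoint_of_mem_segments e f (by tauto) hz hz').symm⟩
  by_cases hbi : b = i
  · subst hbi
    rw [segment_symm] at hz'
    exact ⟨b, ⟨.inl rfl, .inr rfl⟩,
      (h.eq_gridPoint_of_mem_segments e f.symm (by tauto) hz hz').symm⟩
  rw [segment_symm] at hz
  by_cases haj : a = j
  · subst haj
    exact ⟨a, ⟨.inr rfl, .inl rfl⟩,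
      (h.eq_gridPoint_of_mem_segments e.symm f (by tauto) hz hz').symm⟩
  by_cases hbj : b = j
  · subst hbj
    rw [segment_symm] at hz'
    exact ⟨b, ⟨.inr rfl, .inr rfl⟩,
      (h.eq_gridPoint_of_mem_segments e.symm f.symm (by tauto) hz hz').symm⟩
  exact ((h.disjoint_segment e.symm f haj hai hbj hbi).notMem_of_mem_left hz hz').elim

end IsSpreadLayout

/-- The drawing with vertex positions `pos` and straight edges. -/
def straightLineDrawing (G : SimpleGraph V) (pos : V → Pt) : PolylineDrawing G where
  pos := pos
  bends _ _ := []
  bends_symm _ _ := rfl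

section StraightLine

variable {pos : V → Pt} {u v : V}

lemma curve_straightLineDrawing :
    (straightLineDrawing G pos).curve u v = segment ℝ (pos u) (pos v) := by
  simp [straightLineDrawing, PolylineDrawing.curve, PolylineDrawing.chain, chainSet, chainSegs]

lemma points_straightLineDrawing : (straightLineDrawing G pos).points = range pos := by
  simp [straightLineDrawing, PolylineDrawing.points]

lemma isSimpleChain_pair {p q : Pt} (h : p ≠ q) : IsSimpleChain [p, q] := by
  refine ⟨le_rfl, by simpa using h, fun i j hij hi hj => ?_⟩
  simp only [chainSegs, List.tail_cons, List.zip_cons_cons, List.zip_nil_right, List.length_cons,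
    List.length_nil] at hi hj
  omega

lemma isPlanar_straightLineDrawing (hpos : Function.Injective pos)
    (hvertex : ∀ ⦃u v w⦄, G.Adj u v → w ≠ u → w ≠ v → pos w ∉ segment ℝ (pos u) (pos v))
    (hedge : ∀ ⦃u v u' v'⦄, G.Adj u v → G.Adj u' v' → s(u, v) ≠ s(u', v') →
      segment ℝ (pos u) (pos v) ∩ segment ℝ (pos u') (pos v') ⊆ pos '' ({u, v} ∩ {u', v'})) :
    (straightLineDrawing G pos).IsPlanar := by
  refine ⟨hpos, fun u v e => ⟨isSimpleChain_pair (hpos.ne e.ne), fun i hi => ?_⟩,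
    fun u v w e hwu hwv => ?_, fun u v u' v' e f hne => ?_⟩
  · exact absurd hi (by simp [straightLineDrawing, PolylineDrawing.chain])
  · rw [curve_straightLineDrawing]
    exact hvertex e hwu hwv
  · rw [curve_straightLineDrawing, curve_straightLineDrawing]
    exact hedge e f hne

end StraightLine

lemma IsSpreadLayout.hasSLDrawingOfHeight {T : ℕ} (h : IsSpreadLayout G x y)
    (hy : ∀ v, 0 ≤ y v ∧ y v ≤ T) : HasSLDrawingOfHeight G (T + 1) := by
  refine ⟨straightLineDrawing G (gridPoint x y), fun _ _ => rfl,
    isPlanar_straightLineDrawing h.gridPoint_injective (fun _ _ _ => h.gridPoint_notMem_segment)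
      fun _ _ _ _ => h.segment_inter_segment_subset, fun p hp => ?_, 0, fun p hp => ?_⟩ <;>
    obtain ⟨v, rfl⟩ := points_straightLineDrawing.subset hp
  · exact ⟨⟨x v, rfl⟩, y v, rfl⟩
  · have hv : ((0 : ℤ) : ℝ) ≤ y v ∧ (y v : ℝ) ≤ T := by exact_mod_cast hy v
    simpa [gridPoint] using hv

lemma IsRowLayout.isSpreadLayout_pow {τ : V → ℕ} {T : ℕ} (h : IsRowLayout G univ τ y)
    (hy : ∀ u v, |y u - y v| ≤ T) : IsSpreadLayout G (fun v => (T + 2 : ℤ) ^ τ v) y where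
  toIsRowLayout := h.congr (fun _ _ _ _ => pow_lt_pow_iff_right₀ (by omega)) fun _ _ _ _ => Iff.rfl
  spread i j k hik hkj := by
    have hT : (1 : ℤ) < T + 2 := by omega
    have hpow : (T + 2 : ℤ) ^ τ k * (T + 2) ≤ (T + 2 : ℤ) ^ τ j := by
      rw [← pow_succ]
      exact pow_le_pow_right₀ hT.le ((pow_lt_pow_iff_right₀ hT).1 hkj)
    have hi : (0 : ℤ) < (T + 2) ^ τ i := by positivity
    nlinarith [mul_le_mul_of_nonneg_right (hy j i) (sub_nonneg.2 hik)]

lemma HasSpanLayout.hasSLDrawingOfHeight {s t : V} {T : ℕ} (h : HasSpanLayout G univ s t T 0) :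
    HasSLDrawingOfHeight G (T + 1) := by
  obtain ⟨τ, y, h⟩ := h
  have hy : ∀ v, 0 ≤ y v ∧ y v ≤ T := by
    intro v
    rcases eq_or_ne v s with rfl | hvs
    · rw [h.row_first]
      omega
    rcases eq_or_ne v t with rfl | hvt
    · rw [h.row_last]
      omega
    have := h.row_mem v trivial hvs hvt
    omega
  have hyy : ∀ u v, |y u - y v| ≤ T := fun u v => by
    have := hy u
    have := hy v
    exact abs_le.2 (by omega)
  exact (h.isSpreadLayout_pow hyy).hasSLDrawingOfHeight hy

end Geometry

section Circle

/-- Twice the signed area of the triangle `p q r`, positive if it is oriented counterclockwise. -/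
def doubleArea (p q r : Pt) : ℝ := (q.1 - p.1) * (r.2 - p.2) - (q.2 - p.2) * (r.1 - p.1)

/-- The point of the unit circle at angle `θ`. -/
noncomputable def circlePoint (θ : ℝ) : Pt := (Real.cos θ, Real.sin θ)

lemma doubleArea_circlePoint (α β γ : ℝ) :
    doubleArea (circlePoint α) (circlePoint β) (circlePoint γ) =
      4 * Real.sin ((β - α) / 2) * Real.sin ((γ - β) / 2) * Real.sin ((γ - α) / 2) := by
  have hsum : doubleArea (circlePoint α) (circlePoint β) (circlePoint γ) =
      Real.sin (β - α) + Real.sin (γ - β) - Real.sin (γ - α) := by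
    simp only [doubleArea, circlePoint, Real.sin_sub]
    ring
  obtain ⟨u, rfl⟩ : ∃ u, β = α + 2 * u := ⟨(β - α) / 2, by ring⟩
  obtain ⟨v, rfl⟩ : ∃ v, γ = α + 2 * u + 2 * v := ⟨(γ - (α + 2 * u)) / 2, by ring⟩
  rw [hsum]
  ring_nf
  rw [Real.sin_add, Real.sin_add, mul_comm u, mul_comm v, Real.sin_two_mul, Real.sin_two_mul,
    Real.cos_two_mul, Real.cos_two_mul, Real.cos_sq', Real.cos_sq']
  ring

lemma doubleArea_circlePoint_pos {α β γ : ℝ} (hαβ : α < β) (hβγ : β < γ)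
    (hαγ : γ - α < 2 * Real.pi) :
    0 < doubleArea (circlePoint α) (circlePoint β) (circlePoint γ) := by
  rw [doubleArea_circlePoint]
  have h₁ := Real.sin_pos_of_pos_of_lt_pi (x := (β - α) / 2) (by linarith) (by linarith)
  have h₂ := Real.sin_pos_of_pos_of_lt_pi (x := (γ - β) / 2) (by linarith) (by linarith)
  have h₃ := Real.sin_pos_of_pos_of_lt_pi (x := (γ - α) / 2) (by linarith) (by linarith)
  positivity

lemma segment_inter_segment_nonempty {a b c d : Pt} (habc : 0 < doubleArea a b c)
    (hacd : 0 < doubleArea a c d) (hbcd : 0 < doubleArea b c d) (habd : 0 < doubleArea a b d) :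
    (segment ℝ a c ∩ segment ℝ b d).Nonempty := by
  have hsum : doubleArea a b c + doubleArea a c d = doubleArea b c d + doubleArea a b d := by
    simp only [doubleArea]
    ring
  have hpos : 0 < doubleArea a b c + doubleArea a c d := by positivity
  have hne := hpos.ne'
  simp only [segment_eq_image']
  refine ⟨_, ⟨doubleArea a b d / (doubleArea a b c + doubleArea a c d), ⟨by positivity,
    (div_le_one hpos).2 (by linarith)⟩, rfl⟩, doubleArea a b c /
    (doubleArea a b c + doubleArea a c d), ⟨by positivity, (div_le_one hpos).2 (by linarith)⟩, ?_⟩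
  ext <;> simp only [Prod.fst_add, Prod.snd_add, Prod.smul_fst, Prod.smul_snd, Prod.fst_sub,
    Prod.snd_sub, smul_eq_mul] <;> field_simp <;> simp only [doubleArea] <;> ring

lemma chords_inter_nonempty {α β γ δ : ℝ} (hαβ : α < β) (hβγ : β < γ) (hγδ : γ < δ)
    (hαδ : δ - α < 2 * Real.pi) :
    (segment ℝ (circlePoint α) (circlePoint γ) ∩
      segment ℝ (circlePoint β) (circlePoint δ)).Nonempty := by
  apply segment_inter_segment_nonempty <;> apply doubleArea_circlePoint_pos <;> linarith

lemma exists_circlePoint_eq {p : Pt} (hp : p.1 ^ 2 + p.2 ^ 2 = 1) :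
    ∃ θ ∈ Ioc (-Real.pi) Real.pi, circlePoint θ = p := by
  have hnorm : ‖(⟨p.1, p.2⟩ : ℂ)‖ = 1 := by
    rw [Complex.norm_eq_sqrt_sq_add_sq, hp, Real.sqrt_one]
  refine ⟨Complex.arg ⟨p.1, p.2⟩, Complex.arg_mem_Ioc _, Prod.ext ?_ ?_⟩
  · simpa only [circlePoint, hnorm, one_mul] using Complex.norm_mul_cos_arg ⟨p.1, p.2⟩
  · simpa only [circlePoint, hnorm, one_mul] using Complex.norm_mul_sin_arg ⟨p.1, p.2⟩

end Circle

section Noncrossing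

variable {V : Type*} {G : SimpleGraph V}

/-- No two edges of `G` cross when its vertices are arranged on a line in increasing order and all
edges are drawn on the same side of it: a one-page book embedding. -/
def IsNoncrossing (G : SimpleGraph V) [LinearOrder V] : Prop :=
  ∀ ⦃a b c d⦄, a < b → b < c → c < d → G.Adj a c → ¬ G.Adj b d

lemma IsOuterplanar.exists_isNoncrossing (hG : IsOuterplanar G) :
    ∃ _ : LinearOrder V, IsNoncrossing G := by
  obtain ⟨pos, hinj, hcircle, hmeet⟩ := hG
  choose θ hθ hpos using fun v => exists_circlePoint_eq (hcircle v)
  have hθinj : Function.Injective θ := fun u v huv => hinj (by rw [← hpos u, ← hpos v, huv])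
  let angleOrder := LinearOrder.lift' θ hθinj
  refine ⟨angleOrder, fun a b c d hab hbc hcd e f => ?_⟩
  obtain ⟨z, hz⟩ := chords_inter_nonempty (α := θ a) (β := θ b) (γ := θ c) (δ := θ d) hab hbc hcd
    (by linarith [(hθ a).1, (hθ d).2])
  simp only [hpos] at hz
  have hne : s(a, c) ≠ s(b, d) := fun h => by
    rcases Sym2.eq_iff.1 h with ⟨rfl, -⟩ | ⟨rfl, -⟩ <;> order
  obtain ⟨w, ⟨rfl | rfl, rfl | rfl⟩, -⟩ := hmeet a c b d e f hne hz <;> order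

variable [LinearOrder V] [Finite V] {s t : V}

lemma IsNoncrossing.exists_isSplit (hG : IsNoncrossing G) (hst : s < t) (hcov : ¬ s ⋖ t) :
    ∃ x ∈ Ioo s t, IsSplit G (Icc s x) (Icc x t) s x t := by
  have hne : {x ∈ Ioo s t | G.Adj s x ∨ s ⋖ x}.Nonempty := by
    obtain ⟨x, hsx, hxt⟩ := exists_covBy_le_of_lt hst
    exact ⟨x, ⟨hsx.lt, hxt.lt_of_ne fun h => hcov (h ▸ hsx)⟩, .inr hsx⟩
  obtain ⟨x, ⟨⟨hsx, hxt⟩, hx⟩, hmax⟩ := exists_max_image _ id (toFinite _) hne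
  refine ⟨x, ⟨hsx, hxt⟩, Icc_inter_Icc_eq_singleton hsx.le hxt.le, left_mem_Icc.2 hsx.le,
    right_mem_Icc.2 hxt.le, hsx.ne, hxt.ne, fun u hu v hv e => ?_⟩
  by_contra! hcon
  have hux : u < x := lt_of_not_ge fun hxu => hcon.1 ⟨hxu, hu.2.trans hxt.le⟩
  have hxv : x < v := lt_of_not_ge fun hvx => hcon.2.1 ⟨hsx.le.trans hv.1, hvx⟩
  rcases hu.1.eq_or_lt with rfl | hsu
  · have hvt : v < t := hv.2.lt_of_ne (hcon.2.2 rfl)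
    exact (hmax v ⟨⟨hsx.trans hxv, hvt⟩, .inl e⟩).not_gt hxv
  · rcases hx with hadj | hcovx
    · exact hG hsu hux hxv hadj e
    · exact hcovx.2 hsu hux

lemma IsNoncrossing.isRootedPiece_Icc (hG : IsNoncrossing G) (hst : s < t) :
    IsRootedPiece G (Icc s t) s t (Ico s t).ncard := by
  induction hn : (Ico s t).ncard using Nat.strong_induction_on generalizing s t with
  | _ n ih =>
    subst hn
    by_cases hcov : s ⋖ t
    · rw [hcov.Icc_eq, hcov.Ico_eq, ncard_singleton]
      exact .pair hst.ne
    obtain ⟨x, ⟨hsx, hxt⟩, hsplit⟩ := hG.exists_isSplit hst hcov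
    have hcard : (Ico s t).ncard = (Ico s x).ncard + (Ico x t).ncard := by
      rw [← Ico_union_Ico_eq_Ico hsx.le hxt.le, ncard_union_eq Ico_disjoint_Ico_same]
    have hA : 0 < (Ico s x).ncard := (ncard_pos).2 (nonempty_Ico.2 hsx)
    have hB : 0 < (Ico x t).ncard := (ncard_pos).2 (nonempty_Ico.2 hxt)
    rw [← Icc_union_Icc_eq_Icc hsx.le hxt.le, hcard]
    exact .union hsplit (ih _ (by omega) hsx rfl) (ih _ (by omega) hxt rfl)

end Noncrossing

lemma three_mul_natLog_add_four_le {n : ℕ} (hn : 2 ≤ n) :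
    ((3 * Nat.log 2 n + 4 : ℕ) : ℝ) ≤ 7 / Real.log 2 * Real.log n := by
  have hlog : 1 ≤ Nat.log 2 n := Nat.log_pos one_lt_two hn
  calc ((3 * Nat.log 2 n + 4 : ℕ) : ℝ) ≤ 7 * Nat.log 2 n := by
        norm_cast
        omega
    _ ≤ 7 * Real.logb 2 n := by gcongr; exact_mod_cast Real.natLog_le_logb n 2
    _ = 7 / Real.log 2 * Real.log n := by rw [← Real.log_div_log]; ring

theorem outerplanar_straightLine_height_log_general {V : Type*} [Fintype V] {G : SimpleGraph V}
    (hG : IsOuterplanar G) (hn : 2 ≤ Fintype.card V) :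
    HasSLDrawingOfHeight G (3 * Nat.log 2 (Fintype.card V) + 4) := by
  obtain ⟨_, hG⟩ := hG.exists_isNoncrossing
  have : Nontrivial V := Fintype.one_lt_card_iff_nontrivial.1 hn
  obtain ⟨s, hs⟩ := Finite.exists_min (id : V → V)
  obtain ⟨t, ht⟩ := Finite.exists_max (id : V → V)
  have hst : s < t := by
    obtain ⟨u, v, huv⟩ := exists_pair_lt V
    exact (hs u).trans_lt (huv.trans_le (ht v))
  have hpiece : IsRootedPiece G univ s t (Ico s t).ncard := by
    rw [← eq_univ_of_forall fun v => mem_Icc.2 ⟨hs v, ht v⟩]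
    exact hG.isRootedPiece_Icc hst
  have hcard : (Ico s t).ncard ≤ 2 ^ (Nat.log 2 (Fintype.card V) + 1) :=
    calc (Ico s t).ncard ≤ Nat.card V := ncard_le_card _
      _ = Fintype.card V := Nat.card_eq_fintype_card
      _ ≤ 2 ^ (Nat.log 2 (Fintype.card V) + 1) := (Nat.lt_pow_succ_log_self one_lt_two _).le
  have hspan := allSpanLayouts_two_pow G _ hpiece hcard le_rfl (.inl rfl)
  exact_mod_cast hspan.hasSLDrawingOfHeight

/-- There is a constant `c` such that every finite simple
outerplanar graph with `n ≥ 2` vertices has a planar straight-line drawing of height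
at most `c · log n`. -/
theorem outerplanar_straightLine_height_log :
    ∃ c : ℝ, ∀ (V : Type) [Fintype V], ∀ G : SimpleGraph V,
      IsOuterplanar G → 2 ≤ Fintype.card V →
      ∃ h : ℕ, (h : ℝ) ≤ c * Real.log (Fintype.card V) ∧ HasSLDrawingOfHeight G h :=
  ⟨7 / Real.log 2, fun _ _ _ hG hn =>
    ⟨_, three_mul_natLog_add_four_le hn, outerplanar_straightLine_height_log_general hG hn⟩⟩
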